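/- Let K be a field, A a commutative K-algebra, B a module over A⊗A, and M an A-module. Write a·₁x = (a⊗1)x and a·₂x = (1⊗a)x for the two A-module structures on B, let B ⊗_A B denote the tensor product over A of B (with the A-action ·₂) and B (with the A-action ·₁). Regard B ⊗_A B as an A^{⊗3}-module by (a⊗b⊗c)·(x⊗y) = ((a⊗b)x) ⊗ ((1⊗c)y), regard B ⊗_K B as an A^{⊗4}-module by (a⊗b⊗c⊗d)·(x⊗y) = ((a⊗b)x) ⊗ ((c⊗d)y), and regard M as an A^{⊗3}-module via μ_3 and as an A^{⊗4}-module via μ_4. Assume that B is flat as an A-module for the action ·₁ and also for the action ·₂. Then for every natural number n, the K-vector spaces Ext^n_{A^{⊗3}}(B ⊗_A B, M) and Ext^n_{A^{⊗4}}(B ⊗_K B, M) are isomorphic. -/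

import Mathlib

/-!
STATEMENT 2: Setting as in Statement 1: `K` a field, `A` a commutative `K`-algebra, `B` a
module over `A ⊗ A`, `M` an `A`-module; `B ⊗_A B` is the quotient of `B ⊗_K B` by the
balancing relations `((1 ⊗ a) x) ⊗ y - x ⊗ ((a ⊗ 1) y)` (tensor over `A` of `B` with the
action `·₂` and `B` with the action `·₁`); `B ⊗_K B` is an `A^{⊗4} = (A⊗A) ⊗ (A⊗A)`-module
by `(a⊗b⊗c⊗d) · (x⊗y) = ((a⊗b)x) ⊗ ((c⊗d)y)` (an instance hypothesis characterised on pure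
tensors by `hsmul`); `B ⊗_A B` is an `A^{⊗3} = (A⊗A) ⊗ A`-module by
`(a⊗b⊗c) · (x⊗y) = ((a⊗b)x) ⊗ ((1⊗c)y)`, i.e. by restricting the quotient
`A^{⊗4}`-structure along `ρ : a⊗b⊗c ↦ a⊗b⊗1⊗c`; `M` is an `A^{⊗3}`-module via `μ₃` and an
`A^{⊗4}`-module via `μ₄`.  Assume `B` is flat as an `A`-module for the action `·₁`
(restriction along `includeLeft : a ↦ a ⊗ 1`) and for `·₂` (along `includeRight`).
Then for every `n : ℕ` the `K`-vector spaces `Ext^n_{A^{⊗3}}(B ⊗_A B, M)` and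
`Ext^n_{A^{⊗4}}(B ⊗_K B, M)` are isomorphic.
-/

open CategoryTheory
open scoped TensorProduct

noncomputable section

/-- The multiplication map `μ₂ : A ⊗ A → A`. -/
def mu2 (K : Type) [Field K] (A : Type) [CommRing A] [Algebra K A] :
    A ⊗[K] A →ₐ[K] A :=
  Algebra.TensorProduct.lmul' K

/-- The multiplication map `μ₃ : A^{⊗3} = (A ⊗ A) ⊗ A → A`, `a ⊗ b ⊗ c ↦ abc`. -/
def mu3 (K : Type) [Field K] (A : Type) [CommRing A] [Algebra K A] :
    (A ⊗[K] A) ⊗[K] A →ₐ[K] A :=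
  (mu2 K A).comp (Algebra.TensorProduct.map (mu2 K A) (AlgHom.id K A))

/-- The multiplication map `μ₄ : A^{⊗4} = (A ⊗ A) ⊗ (A ⊗ A) → A`, `a ⊗ b ⊗ c ⊗ d ↦ abcd`. -/
def mu4 (K : Type) [Field K] (A : Type) [CommRing A] [Algebra K A] :
    (A ⊗[K] A) ⊗[K] (A ⊗[K] A) →ₐ[K] A :=
  (mu2 K A).comp (Algebra.TensorProduct.map (mu2 K A) (mu2 K A))

/-- The map `ρ : A^{⊗3} → A^{⊗4}`, `a ⊗ b ⊗ c ↦ a ⊗ b ⊗ 1 ⊗ c`. -/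
def rho (K : Type) [Field K] (A : Type) [CommRing A] [Algebra K A] :
    (A ⊗[K] A) ⊗[K] A →ₐ[K] (A ⊗[K] A) ⊗[K] (A ⊗[K] A) :=
  Algebra.TensorProduct.map (AlgHom.id K (A ⊗[K] A)) Algebra.TensorProduct.includeRight

/-- The balancing relators `((1 ⊗ a) x) ⊗ y - x ⊗ ((a ⊗ 1) y)` whose span is the kernel of
the canonical quotient map `B ⊗_K B → B ⊗_A B`. -/
def relators (K : Type) [Field K] (A : Type) [CommRing A] [Algebra K A]
    (B : Type) [AddCommGroup B] [Module K B] [Module (A ⊗[K] A) B]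
    [Module ((A ⊗[K] A) ⊗[K] (A ⊗[K] A)) (B ⊗[K] B)] :
    Submodule ((A ⊗[K] A) ⊗[K] (A ⊗[K] A)) (B ⊗[K] B) :=
  Submodule.span _
    {z | ∃ (a : A) (x y : B),
      z = ((((1 : A) ⊗ₜ[K] a : A ⊗[K] A) • x) ⊗ₜ[K] y : B ⊗[K] B) -
            x ⊗ₜ[K] (((a ⊗ₜ[K] (1 : A) : A ⊗[K] A) • y : B))}

section lib

open Limits

section
variable {C D : Type*} [Category* C] [Category* D] [Abelian C] [Abelian D]
  (F : C ⥤ D) [F.Additive] [PreservesFiniteColimits F] (W : ObjectProperty C)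

lemma step_aux (hW : ∀ S : ShortComplex C, S.ShortExact → Projective S.X₂ → W S.X₃ →
    W S.X₁ ∧ Mono (F.map S.f)) (S : ShortComplex C) (hS : S.Exact) (hp : Projective S.X₃)
    (hc : W (cokernel S.g)) : W (cokernel S.f) ∧ (S.map F).Exact := by
  have hm : Mono (cokernel.desc S.f S.g S.zero) := hS.mono_cokernelDesc
  let T : ShortComplex C := ShortComplex.mk (cokernel.desc S.f S.g S.zero) (cokernel.π S.g) (by
    rw [← cancel_epi (cokernel.π S.f)]; simp)
  have hT : T.ShortExact := by
    refine ⟨?_⟩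
    have h1 := ShortComplex.exact_cokernel S.g
    let ψ : ShortComplex.mk S.g (cokernel.π S.g) (by simp) ⟶ T :=
      { τ₁ := cokernel.π S.f, τ₂ := 𝟙 _, τ₃ := 𝟙 _ }
    have : Epi ψ.τ₁ := by dsimp [ψ]; infer_instance
    have : IsIso ψ.τ₂ := by dsimp [ψ]; infer_instance
    have : Mono ψ.τ₃ := by dsimp [ψ]; infer_instance
    exact (ShortComplex.exact_iff_of_epi_of_isIso_of_mono ψ).1 h1
  obtain ⟨h1, h2⟩ := hW T hT hp hc
  refine ⟨h1, ?_⟩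
  let U : ShortComplex C := ShortComplex.mk S.f (cokernel.π S.f) (by simp)
  have hU : U.Exact := ShortComplex.exact_cokernel S.f
  have hUF : (U.map F).Exact := hU.map_of_epi_of_preservesCokernel F inferInstance inferInstance
  let ψ : U.map F ⟶ S.map F :=
      { τ₁ := 𝟙 (F.obj S.X₁), τ₂ := 𝟙 (F.obj S.X₂), τ₃ := F.map T.f,
        comm₁₂ := (Category.id_comp (F.map S.f)).trans (Category.comp_id (F.map S.f)).symm
        comm₂₃ := by
          refine (Category.id_comp (F.map S.g)).trans ?_
          refine Eq.trans ?_ (F.map_comp (cokernel.π S.f) (cokernel.desc S.f S.g S.zero))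
          rw [cokernel.π_desc] }
  have : Epi ψ.τ₁ := inferInstanceAs (Epi (𝟙 (F.obj S.X₁)))
  have : IsIso ψ.τ₂ := inferInstanceAs (IsIso (𝟙 (F.obj S.X₂)))
  have : Mono ψ.τ₃ := h2
  exact (ShortComplex.exact_iff_of_epi_of_isIso_of_mono ψ).1 hUF

lemma coker_aux [W.IsClosedUnderIsomorphisms]
    (hW : ∀ S : ShortComplex C, S.ShortExact → Projective S.X₂ → W S.X₃ →
    W S.X₁ ∧ Mono (F.map S.f)) {X : C} (P : ProjectiveResolution X) (hX : W X) (n : ℕ) :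
    W (cokernel (P.complex.d (n+1) n)) := by
  induction n with
  | zero =>
    exact W.prop_of_iso (P.isColimitCokernelCofork.coconePointUniqueUpToIso
      (colimit.isColimit (parallelPair (P.complex.d 1 0) 0))) hX
  | succ n ih => exact (step_aux F W hW _ (P.exact_succ n) (P.projective n) ih).1

lemma aug_aux {X : C} (P : ProjectiveResolution X) :
    ∃ (p : P.complex.X 0 ⟶ X) (w : P.complex.d 1 0 ≫ p = 0), Epi p ∧
      (ShortComplex.mk _ _ w).Exact :=
  ⟨P.π.f 0, P.complex_d_comp_π_f_zero, inferInstanceAs (Epi (P.π.f 0)), P.exact₀⟩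

lemma quasi_aux (Q : ChainComplex D ℕ) (X : D) (q : Q.X 0 ⟶ X) (w : Q.d 1 0 ≫ q = 0) (hq : Epi q)
    (h0 : (ShortComplex.mk _ _ w).Exact) (h : ∀ n, Q.ExactAt (n+1)) :
    QuasiIso ((ChainComplex.toSingle₀Equiv Q X).symm ⟨q, w⟩) :=
  ⟨fun n => by
    cases n with
    | zero =>
      rw [ChainComplex.quasiIsoAt₀_iff, ShortComplex.quasiIso_iff_of_zeros']
      · refine (ShortComplex.exact_and_epi_g_iff_of_iso ?_).2 ⟨h0, hq⟩
        exact ShortComplex.isoMk (Iso.refl (Q.X 1)) (Iso.refl (Q.X 0)) (Iso.refl X)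
            ((Category.id_comp (Q.d 1 0)).trans (Category.comp_id (Q.d 1 0)).symm) 
            ((Category.id_comp q).trans ((Category.comp_id _).trans 
              (ChainComplex.toSingle₀Equiv_symm_apply_f_zero q w)).symm)
      · exact Q.shape 0 0 (by simp)
      all_goals rfl
    | succ n =>
      rw [quasiIsoAt_iff_exactAt']
      · exact h n
      · apply ChainComplex.exactAt_succ_single_obj⟩

lemma mapRes [W.IsClosedUnderIsomorphisms] [F.PreservesProjectiveObjects]
    (hW : ∀ S : ShortComplex C, S.ShortExact → Projective S.X₂ → W S.X₃ →
    W S.X₁ ∧ Mono (F.map S.f)) {X : C} (P : ProjectiveResolution X) (hX : W X) :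
    ∃ Q : ProjectiveResolution (F.obj X),
      Q.complex = (F.mapHomologicalComplex _).obj P.complex := by
  obtain ⟨p, w, hp, hex⟩ := aug_aux P
  have w' : F.map (P.complex.d 1 0) ≫ F.map p = 0 := by rw [← F.map_comp, w, F.map_zero]
  have hq := quasi_aux ((F.mapHomologicalComplex (ComplexShape.down ℕ)).obj P.complex) (F.obj X)
    (F.map p) w' (inferInstanceAs (Epi (F.map p)))
    (hex.map_of_epi_of_preservesCokernel F hp inferInstance)
    (fun n => by
      rw [HomologicalComplex.exactAt_iff' _ (n + 2) (n + 1) n (by simp) (by simp)]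
      exact (step_aux F W hW _ (P.exact_succ n) (P.projective n) (coker_aux F W hW P hX n)).2)
  exact ⟨{ complex := (F.mapHomologicalComplex _).obj P.complex
           projective := fun n =>
            Functor.PreservesProjectiveObjects.projective_obj (P.projective n)
           π := _
           quasiIso := hq }, rfl⟩
end

section
variable {k R S : Type} [CommRing k] [CommRing R] [CommRing S] (κ : k →+* R) (φ : R →+* S)

noncomputable def homLin (P : ModuleCat.{0} R) (N : ModuleCat.{0} S) :
    (ModuleCat.restrictScalars (φ.comp κ)).obj
      (ModuleCat.of S ((ModuleCat.extendScalars φ).obj P ⟶ N)) ≅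
    (ModuleCat.restrictScalars κ).obj
      (ModuleCat.of R (P ⟶ (ModuleCat.restrictScalars φ).obj N)) :=
  let e : ↑((ModuleCat.restrictScalars (φ.comp κ)).obj
      (ModuleCat.of S ((ModuleCat.extendScalars φ).obj P ⟶ N))) ≃ₗ[k]
    ↑((ModuleCat.restrictScalars κ).obj
      (ModuleCat.of R (P ⟶ (ModuleCat.restrictScalars φ).obj N))) :=
   { toFun := fun f => (ModuleCat.extendRestrictScalarsAdj φ).homEquiv P N f
     invFun := fun f => ((ModuleCat.extendRestrictScalarsAdj φ).homEquiv P N).symm f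
     left_inv := fun f => ((ModuleCat.extendRestrictScalarsAdj φ).homEquiv P N).symm_apply_apply f
     right_inv := fun f => ((ModuleCat.extendRestrictScalarsAdj φ).homEquiv P N).apply_symm_apply f
     map_add' := fun f g => by
      apply ModuleCat.hom_ext
      rfl
     map_smul' := fun c f => by
      apply ModuleCat.hom_ext
      rfl }
  e.toModuleIso

noncomputable def complexIso (P : ChainComplex (ModuleCat.{0} R) ℕ) (N : ModuleCat.{0} S) :
    ((ModuleCat.restrictScalars (φ.comp κ)).mapHomologicalComplex _).obj
      (ChainComplex.linearYonedaObj
        (((ModuleCat.extendScalars φ).mapHomologicalComplex _).obj P) S N) ≅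
    ((ModuleCat.restrictScalars κ).mapHomologicalComplex _).obj
      (P.linearYonedaObj R ((ModuleCat.restrictScalars φ).obj N)) :=
  HomologicalComplex.Hom.isoOfComponents (fun i => homLin κ φ (P.X i) N) (fun i j _ => by
    apply ModuleCat.hom_ext
    apply LinearMap.ext
    intro f
    exact ((ModuleCat.extendRestrictScalarsAdj φ).homEquiv_naturality_left (P.d j i) f).symm)

noncomputable def homologyMapIso {R S : Type} [CommRing R] [CommRing S] (f : R →+* S)
   (X : CochainComplex (ModuleCat.{0} S) ℕ) (n : ℕ) :
    (ModuleCat.restrictScalars f).obj (X.homology n) ≅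
    (((ModuleCat.restrictScalars f).mapHomologicalComplex _).obj X).homology n :=
   ((X.sc n).mapHomologyIso (ModuleCat.restrictScalars f)).symm

lemma ext_aux {X : ModuleCat.{0} R} (P : ProjectiveResolution X)
    (Q : ProjectiveResolution ((ModuleCat.extendScalars φ).obj X))
    (h : Q.complex = ((ModuleCat.extendScalars φ).mapHomologicalComplex _).obj P.complex)
    (N : ModuleCat.{0} S) (n : ℕ) :
    Nonempty ((ModuleCat.restrictScalars (φ.comp κ)).obj
      (((Ext S (ModuleCat S) n).obj (Opposite.op ((ModuleCat.extendScalars φ).obj X))).obj N) ≅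
      (ModuleCat.restrictScalars κ).obj
      (((Ext R (ModuleCat R) n).obj (Opposite.op X)).obj
        ((ModuleCat.restrictScalars φ).obj N))) := by
  have e1 := Q.isoExt (R := S) n N
  rw [h] at e1
  exact ⟨(ModuleCat.restrictScalars (φ.comp κ)).mapIso e1 ≪≫ homologyMapIso _ _ n ≪≫
    (HomologicalComplex.homologyFunctor _ _ n).mapIso (complexIso κ φ P.complex N) ≪≫
    (homologyMapIso _ _ n).symm ≪≫
    (ModuleCat.restrictScalars κ).mapIso (P.isoExt (R := R) n _).symm⟩
end

lemma flat_ker {C M N P : Type} [CommRing C] [AddCommGroup M] [AddCommGroup N] [AddCommGroup P]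
    [Module C M] [Module C N] [Module C P] [Module.Flat C N] [Module.Flat C P]
    (g : M →ₗ[C] N) (f : N →ₗ[C] P) (hf : Function.Surjective f) (hg : Function.Injective g)
    (H : Function.Exact g f) : Module.Flat C M := by
  rw [Module.Flat.iff_rTensor_injective']
  intro I
  have h1 := LinearMap.lTensor_injective_of_exact_of_flat f hf g hg H I
  have h2 := Module.Flat.rTensor_preserves_injective_linearMap (M := N) I.subtype
    I.injective_subtype
  have h3 : Function.Injective ((g.lTensor C) ∘ₗ (I.subtype.rTensor M)) := by
    rw [LinearMap.lTensor_comp_rTensor, ← LinearMap.rTensor_comp_lTensor]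
    exact h2.comp h1
  exact Function.Injective.of_comp (f := g.lTensor C) h3

lemma one_tmul_eq_zero {R M : Type} [CommRing R] [AddCommGroup M] [Module R M] (I : Ideal R)
    (m : M) : (1 : R ⧸ I) ⊗ₜ[R] m = 0 ↔ m ∈ (I • ⊤ : Submodule R M) := by
  rw [← (TensorProduct.quotTensorEquivQuotSMul M I).map_eq_zero_iff]
  have : (1 : R ⧸ I) = Ideal.Quotient.mk I 1 := rfl
  rw [this, TensorProduct.quotTensorEquivQuotSMul_mk_tmul]
  simp [Submodule.Quotient.mk_eq_zero]

lemma one_tmul_eq_zero' {R S M : Type} [CommRing R] [CommRing S] [Algebra R S]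
    (hs : Function.Surjective (algebraMap R S)) [AddCommGroup M] [Module R M]
    (m : M) : (1 : S) ⊗ₜ[R] m = 0 ↔ m ∈ (RingHom.ker (algebraMap R S) • ⊤ : Submodule R M) := by
  let e : (R ⧸ RingHom.ker (Algebra.ofId R S)) ≃ₐ[R] S :=
    Ideal.quotientKerAlgEquivOfSurjective (f := Algebra.ofId R S) hs
  have := one_tmul_eq_zero (RingHom.ker (Algebra.ofId R S)) m
  rw [← (LinearEquiv.rTensor M e.toLinearEquiv).map_eq_zero_iff] at this
  simp only [LinearEquiv.rTensor_tmul] at this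
  have h1 : e.toLinearEquiv 1 = 1 := map_one e
  rw [h1] at this
  exact this

lemma inj_aux {C R S M N P : Type} [CommRing C] [CommRing R] [CommRing S] [Algebra C R]
    [Algebra R S] [AddCommGroup M] [AddCommGroup N] [AddCommGroup P]
    [Module C M] [Module C N] [Module C P] [Module R M] [Module R N] [Module R P]
    [IsScalarTower C R M] [IsScalarTower C R N] [IsScalarTower C R P] [Module.Flat C P]
    (hs : Function.Surjective (algebraMap R S))
    (I : Ideal C) (hI : RingHom.ker (algebraMap R S) = I.map (algebraMap C R))
    (g : M →ₗ[R] N) (f : N →ₗ[R] P) (hf : Function.Surjective f) (hg : Function.Injective g)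
    (H : Function.Exact g f) : Function.Injective (g.lTensor S) := by
  have h1 := LinearMap.lTensor_injective_of_exact_of_flat (f.restrictScalars C) hf
    (g.restrictScalars C) hg H (C ⧸ I)
  rw [injective_iff_map_eq_zero] at h1 ⊢
  intro x hx
  have hx1 : ∃ m : M, x = 1 ⊗ₜ m := by
    clear hx
    induction x using TensorProduct.induction_on with
    | zero => exact ⟨0, by simp⟩
    | tmul s m =>
      obtain ⟨r, rfl⟩ := hs s
      exact ⟨r • m, by rw [← TensorProduct.smul_tmul, Algebra.smul_def, mul_one]⟩
    | add x y hx hy =>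
      obtain ⟨a, rfl⟩ := hx
      obtain ⟨b, rfl⟩ := hy
      exact ⟨a + b, by rw [TensorProduct.tmul_add]⟩
  obtain ⟨m, rfl⟩ := hx1
  rw [LinearMap.lTensor_tmul, one_tmul_eq_zero' hs, hI] at hx
  rw [one_tmul_eq_zero' hs, hI]
  have key : ∀ n : N, n ∈ (I.map (algebraMap C R) • ⊤ : Submodule R N) →
      n ∈ (I • ⊤ : Submodule C N) := by
    intro n hn
    refine Submodule.smul_induction_on hn ?_ (fun _ _ => add_mem)
    intro r hr n _
    induction hr using Submodule.span_induction with
    | mem x h =>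
      obtain ⟨c, hc, rfl⟩ := h
      rw [algebraMap_smul]
      exact Submodule.smul_mem_smul hc trivial
    | zero => simp
    | add x y _ _ hx hy => rw [add_smul]; exact add_mem hx hy
    | smul a x _ hx =>
      rw [smul_eq_mul, mul_smul]
      refine Submodule.smul_induction_on hx ?_ ?_
      · intro c hc n _
        rw [smul_comm]
        exact Submodule.smul_mem_smul hc trivial
      · intro x y hx hy
        rw [smul_add]; exact add_mem hx hy
  have h2 := (one_tmul_eq_zero I (g m)).2 (key _ hx)
  have h3 := (one_tmul_eq_zero I m).1 (h1 _ h2)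
  refine Submodule.smul_induction_on h3 ?_ (fun _ _ => add_mem)
  intro c hc n _
  rw [← algebraMap_smul R c n]
  exact Submodule.smul_mem_smul (Ideal.mem_map_of_mem _ hc) trivial

lemma flat_tensor {K S T M N : Type} [CommRing K] [CommRing S] [CommRing T] [Algebra K S]
    [Algebra K T] [AddCommGroup M] [AddCommGroup N] [Module K M] [Module K N] [Module S M]
    [Module T N] [IsScalarTower K S M] [IsScalarTower K T N]
    [Module (S ⊗[K] T) (M ⊗[K] N)]
    (h : ∀ (s : S) (t : T) (m : M) (n : N), (s ⊗ₜ[K] t : S ⊗[K] T) • (m ⊗ₜ[K] n : M ⊗[K] N) =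
      (s • m) ⊗ₜ (t • n)) [Module.Flat S M] [Module.Flat T N] :
    Module.Flat (S ⊗[K] T) (M ⊗[K] N) := by
  let _ : Algebra T (S ⊗[K] T) := Algebra.TensorProduct.rightAlgebra
  let L := (S ⊗[K] T) ⊗[T] N
  have : IsScalarTower S (S ⊗[K] T) (M ⊗[K] N) := ⟨fun s r x => by
    rw [Algebra.smul_def, mul_smul]
    generalize r • x = y
    induction y using TensorProduct.induction_on with
    | zero => simp
    | tmul m n => 
      rw [Algebra.TensorProduct.algebraMap_apply, h, TensorProduct.smul_tmul']; simp
    | add x y hx hy => rw [smul_add, smul_add, hx, hy]⟩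
  let _ : Module T (M ⊗[K] N) := Module.compHom _ (algebraMap T (S ⊗[K] T))
  have : IsScalarTower T (S ⊗[K] T) (M ⊗[K] N) := IsScalarTower.of_compHom ..
  have : SMulCommClass S (S ⊗[K] T) (M ⊗[K] N) := ⟨fun s r x => by
    rw [← algebraMap_smul (S ⊗[K] T) s, ← algebraMap_smul (S ⊗[K] T) s, smul_comm]⟩
  have : SMulCommClass S T (M ⊗[K] N) := ⟨fun s r x => by
    rw [← algebraMap_smul (S ⊗[K] T) s, ← algebraMap_smul (S ⊗[K] T) s, 
     ← algebraMap_smul (S ⊗[K] T) r, ← algebraMap_smul (S ⊗[K] T) r, smul_comm]⟩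
  let a : N →ₗ[T] (M →ₗ[S] M ⊗[K] N) :=
    { toFun := fun n => 
        { toFun := fun m => m ⊗ₜ n
          map_add' := fun x y => TensorProduct.add_tmul ..
          map_smul' := fun s x => rfl }
      map_add' := fun x y => LinearMap.ext fun m => TensorProduct.tmul_add ..
      map_smul' := fun t n => LinearMap.ext fun m => by
        change m ⊗ₜ[K] (t • n) = algebraMap T (S ⊗[K] T) t • (m ⊗ₜ[K] n)
        rw [Algebra.TensorProduct.right_algebraMap_apply, h, one_smul] }
  let b : L →ₗ[S ⊗[K] T] (M →ₗ[S] M ⊗[K] N) := LinearMap.liftBaseChange _ a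
  let fwd : L ⊗[S] M →ₗ[S ⊗[K] T] M ⊗[K] N := TensorProduct.AlgebraTensorModule.lift b
  have tri : ∀ (s : S) (t : T) (m : M) (n : N),
      (((1 : S ⊗[K] T) ⊗ₜ[T] (t • n) : L) ⊗ₜ[S] (s • m) : L ⊗[S] M) =
      (s ⊗ₜ[K] t : S ⊗[K] T) • (((1 : S ⊗[K] T) ⊗ₜ[T] n : L) ⊗ₜ[S] m) := by
    intro s t m n
    rw [← TensorProduct.smul_tmul, ← TensorProduct.smul_tmul, TensorProduct.smul_tmul',
      TensorProduct.smul_tmul', TensorProduct.smul_tmul']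
    congr 2
    rw [Algebra.smul_def, Algebra.smul_def, Algebra.TensorProduct.right_algebraMap_apply,
      Algebra.TensorProduct.algebraMap_apply]
    simp
  have ktri : ∀ (c : K) (m : M) (n : N),
      (((1 : S ⊗[K] T) ⊗ₜ[T] (c • n) : L) ⊗ₜ[S] m : L ⊗[S] M) =
        ((1 : S ⊗[K] T) ⊗ₜ[T] n : L) ⊗ₜ[S] (c • m) := by
    intro c m n
    have h1 := tri 1 (algebraMap K T c) m n
    have h2 := tri (algebraMap K S c) 1 m n
    rw [one_smul, algebraMap_smul] at h1 h2
    rw [h1, h2]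
    congr 1
    rw [Algebra.algebraMap_eq_smul_one, Algebra.algebraMap_eq_smul_one, TensorProduct.smul_tmul]
  let bwd : M ⊗[K] N →+ L ⊗[S] M := TensorProduct.liftAddHom
    { toFun := fun m =>
       { toFun := fun n => ((1 : S ⊗[K] T) ⊗ₜ[T] n : L) ⊗ₜ[S] m
         map_zero' := by simp
         map_add' := fun x y => by rw [TensorProduct.tmul_add, TensorProduct.add_tmul] }
      map_zero' := by ext; simp
      map_add' := fun x y => by ext n; exact TensorProduct.tmul_add .. }
    (fun c m n => (ktri c m n).symm)
  have bwdlin : ∀ (r : S ⊗[K] T) (x : M ⊗[K] N), bwd (r • x) = r • bwd x := by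
    intro r x
    induction x using TensorProduct.induction_on with
    | zero => simp
    | add x y hx hy => rw [smul_add, map_add, map_add, smul_add, hx, hy]
    | tmul m n =>
      induction r using TensorProduct.induction_on with
      | zero => simp
      | add x y hx hy => rw [add_smul, map_add, add_smul, hx, hy]
      | tmul s t =>
        rw [h]
        exact tri s t m n
  let bwd' : M ⊗[K] N →ₗ[S ⊗[K] T] L ⊗[S] M := { bwd with map_smul' := bwdlin }
  refine Module.Flat.of_retract bwd' fwd ?_
  apply LinearMap.ext
  intro x
  induction x using TensorProduct.induction_on with
  | zero => simp
  | add x y hx hy => rw [map_add, hx, hy, map_add]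
  | tmul m n =>
    change (1 : S ⊗[K] T) • (m ⊗ₜ[K] n) = m ⊗ₜ[K] n
    rw [one_smul]

/-- Flatness over `C` of an `R`-module restricted along `j : C → R`. -/
def flatProp {C R : Type} [CommRing C] [CommRing R] (j : C →+* R) :
    ObjectProperty (ModuleCat.{0} R) :=
  fun N => Module.Flat C ((ModuleCat.restrictScalars j).obj N)

instance flatProp_iso {C R : Type} [CommRing C] [CommRing R] (j : C →+* R) :
    (flatProp j).IsClosedUnderIsomorphisms where
  of_iso {X Y} e h := by
    have : Module.Flat C ((ModuleCat.restrictScalars j).obj X) := h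
    exact Module.Flat.of_linearEquiv ((ModuleCat.restrictScalars j).mapIso e.symm).toLinearEquiv

lemma flatProp_step {C R S : Type} [CommRing C] [CommRing R] [CommRing S] (j : C →+* R)
    (φ : R →+* S) (hφ : Function.Surjective φ) (I : Ideal C) (hI : RingHom.ker φ = I.map j)
    (hj : j.Flat) (T : ShortComplex (ModuleCat.{0} R)) (hT : T.ShortExact)
    (hp : Projective T.X₂) (h3 : flatProp j T.X₃) :
    flatProp j T.X₁ ∧ Mono ((ModuleCat.extendScalars φ).map T.f) := by
  algebraize [j, φ]
  let _ : ∀ X : ModuleCat.{0} R, Module C X := fun X => Module.compHom X j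
  have : ∀ X : ModuleCat.{0} R, IsScalarTower C R X := fun X => IsScalarTower.of_compHom ..
  have hinj : Function.Injective T.f.hom := (ModuleCat.mono_iff_injective _).1 hT.mono_f
  have hsurj : Function.Surjective T.g.hom := (ModuleCat.epi_iff_surjective _).1 hT.epi_g
  have hex : Function.Exact T.f.hom T.g.hom :=
    (ShortComplex.ShortExact.moduleCat_exact_iff_function_exact _).1 hT.exact
  have : Module.Flat C T.X₃ := h3
  have : Module.Projective R T.X₂ := (IsProjective.iff_projective _).2 hp
  have : Module.Flat C T.X₂ := Module.Flat.trans C R T.X₂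
  refine ⟨flat_ker (T.f.hom.restrictScalars C) (T.g.hom.restrictScalars C) hsurj hinj hex, ?_⟩
  rw [ModuleCat.mono_iff_injective]
  exact inj_aux (C := C) (S := S) hφ I hI T.f.hom T.g.hom hsurj hinj hex

lemma ext_main {k C R S : Type} [CommRing k] [CommRing C] [CommRing R] [CommRing S]
    (κ : k →+* R) (κ' : k →+* S) (j : C →+* R) (φ : R →+* S) (hκ : φ.comp κ = κ')
    (hφ : Function.Surjective φ) (I : Ideal C)
    (hI : RingHom.ker φ = I.map j) (hj : j.Flat) (X : ModuleCat.{0} R) (hX : flatProp j X)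
    (X' : ModuleCat.{0} S) (e : (ModuleCat.extendScalars φ).obj X ≅ X') (N : ModuleCat.{0} S)
    (N' : ModuleCat.{0} R) (e' : (ModuleCat.restrictScalars φ).obj N ≅ N') (n : ℕ) :
    Nonempty ((ModuleCat.restrictScalars κ').obj
      (((Ext S (ModuleCat S) n).obj (Opposite.op X')).obj N) ≅
      (ModuleCat.restrictScalars κ).obj
      (((Ext R (ModuleCat R) n).obj (Opposite.op X)).obj N')) := by
  subst hκ
  have : (ModuleCat.extendScalars φ).PreservesProjectiveObjects :=
    Functor.preservesProjectiveObjects_of_adjunction_of_preservesEpimorphisms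
      (ModuleCat.extendRestrictScalarsAdj φ)
  have : (ModuleCat.extendScalars φ).Additive :=
    (ModuleCat.extendRestrictScalarsAdj φ).left_adjoint_additive
  obtain ⟨Q, hQ⟩ := mapRes (ModuleCat.extendScalars φ) (flatProp j)
    (flatProp_step j φ hφ I hI hj) (ProjectiveResolution.of X) hX
  obtain ⟨i⟩ := ext_aux κ φ (ProjectiveResolution.of X) Q hQ N n
  exact ⟨(ModuleCat.restrictScalars (φ.comp κ)).mapIso
    (((Ext S (ModuleCat S) n).mapIso e.op).app N) ≪≫ i ≪≫
    (ModuleCat.restrictScalars κ).mapIso (((Ext R (ModuleCat R) n).obj _).mapIso e')⟩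



section conc
variable (K : Type) [Field K] (A : Type) [CommRing A] [Algebra K A]

/-- `a ⊗ b ⊗ c ⊗ d ↦ a ⊗ bc ⊗ d`. -/
def phi : (A ⊗[K] A) ⊗[K] (A ⊗[K] A) →ₐ[K] (A ⊗[K] A) ⊗[K] A :=
  Algebra.TensorProduct.productMap Algebra.TensorProduct.includeLeft
    (Algebra.TensorProduct.map Algebra.TensorProduct.includeRight (AlgHom.id K A))

/-- `s ⊗ t ↦ 1 ⊗ s ⊗ t ⊗ 1`. -/
def jay : A ⊗[K] A →ₐ[K] (A ⊗[K] A) ⊗[K] (A ⊗[K] A) :=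
  Algebra.TensorProduct.map Algebra.TensorProduct.includeRight Algebra.TensorProduct.includeLeft

lemma phi_tmul (a b c d : A) : phi K A ((a ⊗ₜ b) ⊗ₜ (c ⊗ₜ d)) = (a ⊗ₜ (b * c)) ⊗ₜ d := by
  simp [phi]

lemma jay_tmul (s t : A) : jay K A (s ⊗ₜ t) = (1 ⊗ₜ s) ⊗ₜ (t ⊗ₜ 1) := by
  simp [jay]

lemma rho_tmul (a b c : A) : rho K A ((a ⊗ₜ b) ⊗ₜ c) = (a ⊗ₜ b) ⊗ₜ (1 ⊗ₜ c) := by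
  simp [rho]

lemma phi_rho (x : (A ⊗[K] A) ⊗[K] A) : phi K A (rho K A x) = x := by
  have : (phi K A).comp (rho K A) = AlgHom.id K _ := by
    ext a <;> simp [phi, rho, Algebra.TensorProduct.one_def]
  exact DFunLike.congr_fun this x

lemma mu3_phi : (mu3 K A).comp (phi K A) = mu4 K A := by
  ext a <;> simp [phi, mu3, mu4, mu2]

lemma phi_jay (x : A ⊗[K] A) : phi K A (jay K A x) = (1 ⊗ₜ mu2 K A x) ⊗ₜ 1 := by
  induction x using TensorProduct.induction_on with
  | zero => simp
  | tmul s t => simp [jay_tmul, phi_tmul, mu2]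
  | add x y hx hy => simp only [map_add, hx, hy, TensorProduct.tmul_add, TensorProduct.add_tmul]

/-- generator -/
def egen (c : A) : (A ⊗[K] A) ⊗[K] (A ⊗[K] A) :=
  (1 ⊗ₜ c) ⊗ₜ (1 ⊗ₜ 1) - (1 ⊗ₜ 1) ⊗ₜ (c ⊗ₜ 1)

lemma sub_rho_mem (x : (A ⊗[K] A) ⊗[K] (A ⊗[K] A)) :
    x - rho K A (phi K A x) ∈ Ideal.span (Set.range (egen K A)) := by
  induction x using TensorProduct.induction_on with
  | zero => simp
  | add x y hx hy =>
    rw [map_add, map_add, add_sub_add_comm]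
    exact add_mem hx hy
  | tmul u v =>
    induction u using TensorProduct.induction_on with
    | zero => simp
    | add x y hx hy =>
      rw [TensorProduct.add_tmul, map_add, map_add, add_sub_add_comm]
      exact add_mem hx hy
    | tmul a b =>
      induction v using TensorProduct.induction_on with
      | zero => simp
      | add x y hx hy =>
        rw [TensorProduct.tmul_add, map_add, map_add, add_sub_add_comm]
        exact add_mem hx hy
      | tmul c d =>
        rw [phi_tmul, rho_tmul]
        have : (a ⊗ₜ b) ⊗ₜ (c ⊗ₜ d) - (a ⊗ₜ (b * c)) ⊗ₜ (1 ⊗ₜ d) =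
          - (((a ⊗ₜ b) ⊗ₜ (1 ⊗ₜ d)) * egen K A c) := by
          rw [egen, mul_sub]; simp [Algebra.TensorProduct.tmul_mul_tmul]
        rw [this]
        exact neg_mem (Ideal.mul_mem_left _ _ (Ideal.subset_span ⟨c, rfl⟩))

lemma egen_jay (c : A) : egen K A c = jay K A (c ⊗ₜ 1 - 1 ⊗ₜ c) := by
  rw [map_sub, jay_tmul, jay_tmul, egen]

lemma ker_phi : RingHom.ker (phi K A).toRingHom =
    (RingHom.ker (mu2 K A).toRingHom).map (jay K A).toRingHom := by
  apply le_antisymm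
  · intro x hx
    have hx' : phi K A x = 0 := hx
    have := sub_rho_mem K A x
    rw [hx', map_zero, sub_zero] at this
    refine Ideal.span_le.2 ?_ this
    rintro _ ⟨c, rfl⟩
    rw [egen_jay]
    refine Ideal.mem_map_of_mem (jay K A).toRingHom ?_
    change mu2 K A _ = 0
    simp [mu2]
  · rw [Ideal.map_le_iff_le_comap]
    intro x hx
    have hx' : mu2 K A x = 0 := hx
    change phi K A (jay K A x) = 0
    rw [phi_jay, hx']; simp

variable (B : Type) [AddCommGroup B] [Module K B] [Module (A ⊗[K] A) B]
    [Module ((A ⊗[K] A) ⊗[K] (A ⊗[K] A)) (B ⊗[K] B)]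
    (hsmul : ∀ (r s : A ⊗[K] A) (x y : B),
      ((r ⊗ₜ[K] s : (A ⊗[K] A) ⊗[K] (A ⊗[K] A)) • (x ⊗ₜ[K] y : B ⊗[K] B)) =
        (r • x) ⊗ₜ[K] (s • y))

lemma relators_eq (hsmul : ∀ (r s : A ⊗[K] A) (x y : B),
      ((r ⊗ₜ[K] s : (A ⊗[K] A) ⊗[K] (A ⊗[K] A)) • (x ⊗ₜ[K] y : B ⊗[K] B)) =
        (r • x) ⊗ₜ[K] (s • y)) :
    relators K A B = RingHom.ker (phi K A).toRingHom • ⊤ := by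
  have key : ∀ (c : A) (x y : B), egen K A c • (x ⊗ₜ[K] y : B ⊗[K] B) =
      ((((1 : A) ⊗ₜ[K] c : A ⊗[K] A) • x) ⊗ₜ[K] y : B ⊗[K] B) -
            x ⊗ₜ[K] (((c ⊗ₜ[K] (1 : A) : A ⊗[K] A) • y : B)) := by
    intro c x y
    have h1 : (1 : A) ⊗ₜ[K] (1 : A) = 1 := rfl
    rw [egen, sub_smul, hsmul, hsmul, h1, one_smul, one_smul]
  apply le_antisymm
  · refine Submodule.span_le.2 ?_
    rintro _ ⟨c, x, y, rfl⟩
    rw [← key]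
    refine Submodule.smul_mem_smul ?_ trivial
    change phi K A _ = 0
    rw [egen, map_sub, phi_tmul, phi_tmul]; simp
  · refine Submodule.smul_le.2 ?_
    intro r hr n _
    have hx' : phi K A r = 0 := hr
    have := sub_rho_mem K A r
    rw [hx', map_zero, sub_zero] at this
    clear hx' hr
    induction this using Submodule.span_induction with
    | zero => 
      have h0 : (0 : (A ⊗[K] A) ⊗[K] (A ⊗[K] A)) • n = 0 := Module.zero_smul n
      exact h0 ▸ zero_mem (relators K A B)
    | add x y _ _ hx hy => rw [add_smul]; exact add_mem hx hy
    | smul a x _ hx => rw [smul_assoc]; exact Submodule.smul_mem _ _ hx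
    | mem x h =>
      obtain ⟨c, rfl⟩ := h
      induction n using TensorProduct.induction_on with
      | zero => rw [smul_zero]; exact zero_mem _
      | add x y hx hy => rw [smul_add]; exact add_mem (hx trivial) (hy trivial)
      | tmul x y => rw [key]; exact Submodule.subset_span ⟨c, x, y, rfl⟩

end conc

/-- Base change along a split surjection is a quotient. -/
lemma quot_iso {R S : Type} [CommRing R] [CommRing S] (φ : R →+* S) (ρ : S →+* R)
    (h : ∀ x, φ (ρ x) = x) (X : Type) [AddCommGroup X] [Module R X] (W : Submodule R X)
    (hW : W = RingHom.ker φ • ⊤) :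
    Nonempty ((ModuleCat.extendScalars φ).obj (ModuleCat.of R X) ≅
      (ModuleCat.restrictScalars ρ).obj (ModuleCat.of R (X ⧸ W))) := by
  algebraize [φ]
  let _ : Module S (X ⧸ W) := Module.compHom _ ρ
  have hs : ∀ (r : R) (q : X ⧸ W), φ r • q = r • q := by
    intro r q
    obtain ⟨x, rfl⟩ := Submodule.Quotient.mk_surjective _ q
    change ρ (φ r) • (Submodule.Quotient.mk x : X ⧸ W) = _
    rw [← Submodule.Quotient.mk_smul, ← Submodule.Quotient.mk_smul, Submodule.Quotient.eq,
      ← sub_smul, hW]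
    refine Submodule.smul_mem_smul ?_ trivial
    rw [RingHom.mem_ker, map_sub, h, sub_self]
  have : IsScalarTower R S (X ⧸ W) := ⟨fun r s q => by
    rw [Algebra.smul_def, mul_smul]; exact hs r _⟩
  let f : S ⊗[R] X →ₗ[S] X ⧸ W := LinearMap.liftBaseChange S W.mkQ
  have hφ : Function.Surjective (algebraMap R S) := fun x => ⟨ρ x, h x⟩
  have hf : Function.Bijective f := by
    constructor
    · rw [injective_iff_map_eq_zero]
      intro z hz
      obtain ⟨x, rfl⟩ : ∃ x : X, (1 : S) ⊗ₜ[R] x = z := by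
        clear hz
        induction z using TensorProduct.induction_on with
        | zero => exact ⟨0, by simp⟩
        | tmul s x => 
          obtain ⟨r, rfl⟩ := hφ s
          exact ⟨r • x, by rw [← TensorProduct.smul_tmul, Algebra.algebraMap_eq_smul_one]⟩
        | add x y hx hy =>
          obtain ⟨a, rfl⟩ := hx
          obtain ⟨b, rfl⟩ := hy
          exact ⟨a + b, TensorProduct.tmul_add _ _ _⟩
      have hz' : W.mkQ x = 0 := by simpa [f] using hz
      rw [Submodule.mkQ_apply, Submodule.Quotient.mk_eq_zero, hW] at hz'
      exact (one_tmul_eq_zero' hφ x).2 hz'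
    · intro q
      obtain ⟨x, rfl⟩ := Submodule.Quotient.mk_surjective _ q
      exact ⟨1 ⊗ₜ x, by simp [f]⟩
  exact ⟨(LinearEquiv.ofBijective f hf).toModuleIso⟩

lemma jay_flat (K : Type) [Field K] (A : Type) [CommRing A] [Algebra K A] :
    (jay K A).toRingHom.Flat := by
  let m1 : Module A (A ⊗[K] A) := TensorProduct.leftModule
  have f1 : @Module.Flat A (A ⊗[K] A) _ _ m1 := inferInstance
  let m2 : Module A (A ⊗[K] A) :=
    Module.compHom _ (Algebra.TensorProduct.includeRight : A →ₐ[K] A ⊗[K] A).toRingHom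
  have hm2 : ∀ (a : A) (x : A ⊗[K] A), m2.toSMul.smul a x = (1 ⊗ₜ a) * x := fun _ _ => rfl
  have f2 : @Module.Flat A (A ⊗[K] A) _ _ m2 := by
    refine @Module.Flat.of_linearEquiv A (A ⊗[K] A) (A ⊗[K] A) _ _ m1 _ m2 f1 ?_
    refine @LinearEquiv.mk A A _ _ _ _ _ _ _ _ _ _ m2 m1
      (@LinearMap.mk A A _ _ _ _ _ _ _ m2 m1 (Algebra.TensorProduct.comm K A A).toAddMonoidHom ?_)
      (Algebra.TensorProduct.comm K A A).symm ?_ ?_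
    · intro a x
      change Algebra.TensorProduct.comm K A A ((1 ⊗ₜ a) * x) =
        a • Algebra.TensorProduct.comm K A A x
      rw [map_mul, Algebra.smul_def]
      rfl
    · intro x; simp
    · intro x; simp
  have t1 : @IsScalarTower K A (A ⊗[K] A) _ m1.toSMul _ := inferInstance
  have t2 : @IsScalarTower K A (A ⊗[K] A) _ m2.toSMul _ := by
    refine @IsScalarTower.mk _ _ _ _ m2.toSMul _ ?_
    intro k a x
    change ((1 : A) ⊗ₜ[K] (k • a)) * x = k • ((1 ⊗ₜ a) * x)
    rw [TensorProduct.tmul_smul, smul_mul_assoc]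
  let m3 : Module (A ⊗[K] A) ((A ⊗[K] A) ⊗[K] (A ⊗[K] A)) :=
    Module.compHom _ (jay K A).toRingHom
  refine @flat_tensor K A A (A ⊗[K] A) (A ⊗[K] A) _ _ _ _ _ _ _ _ _ m2 m1 t2 t1 m3 ?_ f2 f1
  intro s t m n
  change jay K A (s ⊗ₜ t) * (m ⊗ₜ n) = ((1 ⊗ₜ s) * m) ⊗ₜ (t • n)
  rw [jay_tmul, Algebra.TensorProduct.tmul_mul_tmul]
  rw [Algebra.smul_def]
  rfl

end lib

theorem statement2 (K : Type) [Field K] (A : Type) [CommRing A] [Algebra K A]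
    (B : Type) [AddCommGroup B] [Module K B] [Module (A ⊗[K] A) B]
    [IsScalarTower K (A ⊗[K] A) B]
    [Module ((A ⊗[K] A) ⊗[K] (A ⊗[K] A)) (B ⊗[K] B)]
    (hsmul : ∀ (r s : A ⊗[K] A) (x y : B),
      ((r ⊗ₜ[K] s : (A ⊗[K] A) ⊗[K] (A ⊗[K] A)) • (x ⊗ₜ[K] y : B ⊗[K] B)) =
        (r • x) ⊗ₜ[K] (s • y))
    -- `B` is flat as an `A`-module for the action `·₁ = (· ⊗ 1) •` …
    (hflat₁ : Module.Flat A
      ((ModuleCat.restrictScalars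
          (Algebra.TensorProduct.includeLeft : A →ₐ[K] A ⊗[K] A).toRingHom).obj
        (ModuleCat.of (A ⊗[K] A) B)))
    -- … and for the action `·₂ = (1 ⊗ ·) •`:
    (hflat₂ : Module.Flat A
      ((ModuleCat.restrictScalars
          (Algebra.TensorProduct.includeRight : A →ₐ[K] A ⊗[K] A).toRingHom).obj
        (ModuleCat.of (A ⊗[K] A) B)))
    (M : Type) [AddCommGroup M] [Module A M] (n : ℕ) :
    Nonempty
      ((ModuleCat.restrictScalars (algebraMap K ((A ⊗[K] A) ⊗[K] A))).obj
          (((Ext ((A ⊗[K] A) ⊗[K] A) (ModuleCat ((A ⊗[K] A) ⊗[K] A)) n).obj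
              (Opposite.op
                ((ModuleCat.restrictScalars (rho K A).toRingHom).obj
                  (ModuleCat.of ((A ⊗[K] A) ⊗[K] (A ⊗[K] A))
                    ((B ⊗[K] B) ⧸ relators K A B))))).obj
            ((ModuleCat.restrictScalars (mu3 K A).toRingHom).obj (ModuleCat.of A M))) ≅
        (ModuleCat.restrictScalars (algebraMap K ((A ⊗[K] A) ⊗[K] (A ⊗[K] A)))).obj
          (((Ext ((A ⊗[K] A) ⊗[K] (A ⊗[K] A))
                (ModuleCat ((A ⊗[K] A) ⊗[K] (A ⊗[K] A))) n).obj
              (Opposite.op (ModuleCat.of ((A ⊗[K] A) ⊗[K] (A ⊗[K] A)) (B ⊗[K] B)))).obj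
            ((ModuleCat.restrictScalars (mu4 K A).toRingHom).obj (ModuleCat.of A M)))) := by

  obtain ⟨e⟩ := quot_iso (phi K A).toRingHom (rho K A).toRingHom (phi_rho K A) (B ⊗[K] B)
    (relators K A B) (relators_eq K A B hsmul)
  refine ext_main (algebraMap K _) (algebraMap K _) (jay K A).toRingHom (phi K A).toRingHom
    (phi K A).comp_algebraMap (fun x => ⟨_, phi_rho K A x⟩) _ (ker_phi K A) (jay_flat K A)
    _ ?_ _ e _ _ ?_ n
  · let m1 : Module A B :=
      Module.compHom _ (Algebra.TensorProduct.includeLeft : A →ₐ[K] A ⊗[K] A).toRingHom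
    let m2 : Module A B :=
      Module.compHom _ (Algebra.TensorProduct.includeRight : A →ₐ[K] A ⊗[K] A).toRingHom
    have t1 : @IsScalarTower K A B _ m1.toSMul _ := by
      refine @IsScalarTower.mk _ _ _ _ m1.toSMul _ ?_
      intro k a x
      change ((k • a) ⊗ₜ[K] (1 : A)) • x = k • ((a ⊗ₜ[K] (1 : A)) • x)
      rw [← TensorProduct.smul_tmul', smul_assoc]
    have t2 : @IsScalarTower K A B _ m2.toSMul _ := by
      refine @IsScalarTower.mk _ _ _ _ m2.toSMul _ ?_
      intro k a x
      change ((1 : A) ⊗ₜ[K] (k • a)) • x = k • (((1 : A) ⊗ₜ[K] a) • x)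
      rw [TensorProduct.tmul_smul, smul_assoc]
    let m3 : Module (A ⊗[K] A) (B ⊗[K] B) := Module.compHom _ (jay K A).toRingHom
    refine @flat_tensor K A A B B _ _ _ _ _ _ _ _ _ m2 m1 t2 t1 m3 ?_ hflat₂ hflat₁
    intro s t m n
    change jay K A (s ⊗ₜ t) • (m ⊗ₜ n) =
      (((1 : A) ⊗ₜ[K] s) • m) ⊗ₜ[K] ((t ⊗ₜ[K] (1 : A)) • n)
    rw [jay_tmul, hsmul]
  · exact ((ModuleCat.restrictScalarsComp' (phi K A).toRingHom (mu3 K A).toRingHom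
      (mu4 K A).toRingHom (congrArg AlgHom.toRingHom (mu3_phi K A).symm)).app _).symm
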